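/- arXiv:1306.1386 — 3 statements merged into one kernel-verified Lean document; each statement's English description precedes it below -/
import Mathlib

section
/- Let G be a finite simple graph, e an edge of G, and α > 0 a real number. Then S_α(G) > S_α(G−e), where G−e is the graph obtained from G by deleting the edge e. -/
/-!
Deleting an edge `uv` subtracts from the quadratic form `xᵀ Q x = ∑_{ij ∈ E} (x i + x j) ^ 2` the
square `(x u + x v) ^ 2`, so the form decreases. By Weyl's monotonicity principle
(`eigenvalues_le_of_inner_le`) the decreasingly ordered eigenvalues satisfy
`0 ≤ q_i(G - e) ≤ q_i(G)` for every `i`. The trace `∑ i, q_i` is the sum of the degrees and drops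
strictly, so at least one of these inequalities is strict. Since `t ↦ t ^ α` is strictly increasing
on `[0, ∞)` and `0 ^ α = 0`, summing the powers gives the strict inequality for `S α`.
-/

open Matrix Finset

noncomputable section

namespace SLP

variable {V : Type*} [Fintype V] [DecidableEq V]

/-- The signless Laplacian matrix `Q(G) = D(G) + A(G)` of a finite simple graph. -/
def Q (G : SimpleGraph V) : Matrix V V ℝ :=
  letI : DecidableRel G.Adj := Classical.decRel _
  G.degMatrix ℝ + G.adjMatrix ℝ

lemma Q_isHermitian (G : SimpleGraph V) : (Q G).IsHermitian := by
  letI : DecidableRel G.Adj := Classical.decRel _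
  have h : Q G = G.degMatrix ℝ + G.adjMatrix ℝ := rfl
  rw [h, Matrix.IsHermitian]
  ext i j
  simp [Matrix.conjTranspose_apply, SimpleGraph.degMatrix, Matrix.diagonal,
    SimpleGraph.adjMatrix_apply, SimpleGraph.adj_comm]
  rcases eq_or_ne i j with rfl | hij
  · simp
  · simp [hij, Ne.symm hij]

/-- The (unordered) signless Laplacian eigenvalues of `G`, listed with multiplicity
(indexed by the vertices). -/
def eigs (G : SimpleGraph V) : V → ℝ := (Q_isHermitian G).eigenvalues

/-- `S α G`: the sum of the α-th (real) powers of the nonzero signless Laplacian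
eigenvalues of `G`. -/
def S (α : ℝ) (G : SimpleGraph V) : ℝ :=
  ∑ v ∈ Finset.univ.filter (fun v => eigs G v ≠ 0), eigs G v ^ α

open scoped InnerProductSpace in
/-- In an orthonormal eigenbasis a symmetric operator has the diagonal quadratic form
`∑ i, λ i * ⟪b i, x⟫ ^ 2`. -/
lemma inner_apply_self_eq_sum {E : Type*} [NormedAddCommGroup E] [InnerProductSpace ℝ E]
    [FiniteDimensional ℝ E] {n : ℕ} {T : E →ₗ[ℝ] E} (hT : T.IsSymmetric)
    (hn : Module.finrank ℝ E = n) (x : E) :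
    ⟪x, T x⟫_ℝ = ∑ i, hT.eigenvalues hn i * ⟪hT.eigenvectorBasis hn i, x⟫_ℝ ^ 2 := by
  rw [← (hT.eigenvectorBasis hn).sum_inner_mul_inner x (T x)]
  refine Finset.sum_congr rfl fun i _ => ?_
  have h := hT.eigenvectorBasis_apply_self_apply hn x i
  simp only [OrthonormalBasis.repr_apply_apply, RCLike.ofReal_real_eq_id, id] at h
  rw [h, real_inner_comm x]
  ring

open scoped InnerProductSpace in
/-- **Weyl's monotonicity principle**: if the quadratic form of `T` is dominated by that of `T'`,
then each eigenvalue of `T`, in decreasing order, is at most the corresponding one of `T'`. -/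
lemma eigenvalues_le_of_inner_le {E : Type*} [NormedAddCommGroup E] [InnerProductSpace ℝ E]
    [FiniteDimensional ℝ E] {n : ℕ} {T T' : E →ₗ[ℝ] E} (hT : T.IsSymmetric)
    (hT' : T'.IsSymmetric) (hn : Module.finrank ℝ E = n)
    (hle : ∀ x, ⟪x, T x⟫_ℝ ≤ ⟪x, T' x⟫_ℝ) (k : Fin n) :
    hT.eigenvalues hn k ≤ hT'.eigenvalues hn k := by
  -- `x` is sought in the span of the first eigenvectors of `T` (up to index `k`) and of the last
  -- eigenvectors of `T'` (from index `k`): these are only `n - 1` linear conditions.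
  let L : E →ₗ[ℝ] ({j : Fin n // j ≠ k} → ℝ) := LinearMap.pi fun j =>
    if k < j.1 then (innerSL ℝ (hT.eigenvectorBasis hn j.1)).toLinearMap
    else (innerSL ℝ (hT'.eigenvectorBasis hn j.1)).toLinearMap
  have hker : LinearMap.ker L ≠ ⊥ := by
    apply LinearMap.ker_ne_bot_of_finrank_lt
    have := k.pos
    simp only [Module.finrank_fintype_fun_eq_card, ne_eq, Fintype.card_subtype_compl,
      Fintype.card_fin, Fintype.card_subtype_eq, hn]
    omega
  obtain ⟨x, hx, hx0⟩ := Submodule.exists_mem_ne_zero_of_ne_bot hker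
  have hL : ∀ j (hj : j ≠ k), L x ⟨j, hj⟩ = 0 := fun j hj => by
    rw [LinearMap.mem_ker.1 hx]; rfl
  have h1 : ∀ j, k < j → ⟪hT.eigenvectorBasis hn j, x⟫_ℝ = 0 := fun j hj => by
    simpa [L, hj] using hL j hj.ne'
  have h2 : ∀ j, j < k → ⟪hT'.eigenvectorBasis hn j, x⟫_ℝ = 0 := fun j hj => by
    simpa [L, hj.not_gt] using hL j hj.ne
  have hpos : 0 < ‖x‖ ^ 2 := by positivity
  have hlow : hT.eigenvalues hn k * ‖x‖ ^ 2 ≤ ⟪x, T x⟫_ℝ := by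
    rw [inner_apply_self_eq_sum hT hn, ← (hT.eigenvectorBasis hn).sum_sq_inner_right x,
      Finset.mul_sum]
    refine Finset.sum_le_sum fun j _ => ?_
    rcases lt_or_ge k j with h | h
    · simp [h1 j h]
    · exact mul_le_mul_of_nonneg_right (hT.eigenvalues_antitone hn h) (sq_nonneg _)
  have hup : ⟪x, T' x⟫_ℝ ≤ hT'.eigenvalues hn k * ‖x‖ ^ 2 := by
    rw [inner_apply_self_eq_sum hT' hn, ← (hT'.eigenvectorBasis hn).sum_sq_inner_right x,
      Finset.mul_sum]
    refine Finset.sum_le_sum fun j _ => ?_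
    rcases lt_or_ge j k with h | h
    · simp [h2 j h]
    · exact mul_le_mul_of_nonneg_right (hT'.eigenvalues_antitone hn h) (sq_nonneg _)
  exact le_of_mul_le_mul_right (hlow.trans ((hle x).trans hup)) hpos

lemma matrix_eigenvalues_le {A B : Matrix V V ℝ} (hA : A.IsHermitian) (hB : B.IsHermitian)
    (hle : ∀ x : V → ℝ, x ⬝ᵥ A *ᵥ x ≤ x ⬝ᵥ B *ᵥ x) (v : V) :
    hA.eigenvalues v ≤ hB.eigenvalues v := by
  refine eigenvalues_le_of_inner_le _ _ _ (fun x => ?_) _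
  have h := hle x.ofLp
  simpa [EuclideanSpace.inner_eq_star_dotProduct, Matrix.ofLp_toLpLin, dotProduct_comm] using h

/-- The definition of `Q` with an arbitrary decidability instance. -/
lemma Q_eq (G : SimpleGraph V) [inst : DecidableRel G.Adj] :
    Q G = G.degMatrix ℝ + G.adjMatrix ℝ := by
  rw [Subsingleton.elim inst (Classical.decRel _)]
  rfl

/-- The sum runs over ordered pairs, so every edge is counted twice. -/
lemma dotProduct_Q_mulVec (G : SimpleGraph V) [DecidableRel G.Adj] (x : V → ℝ) :
    x ⬝ᵥ Q G *ᵥ x = (∑ i, ∑ j, if G.Adj i j then (x i + x j) ^ 2 else 0) / 2 := by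
  have hswap : (∑ i, ∑ j, if G.Adj i j then x j * x j else 0)
      = ∑ i, ∑ j, if G.Adj i j then x i * x i else 0 := by
    rw [Finset.sum_comm]
    simp only [G.adj_comm]
  have hdeg : x ⬝ᵥ G.degMatrix ℝ *ᵥ x = ∑ i, ∑ j, if G.Adj i j then x i * x i else 0 := by
    rw [SimpleGraph.dotProduct_mulVec_degMatrix]
    refine Finset.sum_congr rfl fun i _ => ?_
    rw [SimpleGraph.degree_eq_sum_if_adj (G := G) (R := ℝ), Finset.sum_mul, Finset.sum_mul]
    simp
  have hadj : x ⬝ᵥ G.adjMatrix ℝ *ᵥ x = ∑ i, ∑ j, if G.Adj i j then x i * x j else 0 := by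
    simp [dotProduct, mulVec, SimpleGraph.adjMatrix_apply, Finset.mul_sum]
  have hexp : (∑ i, ∑ j, if G.Adj i j then (x i + x j) ^ 2 else 0)
      = (∑ i, ∑ j, if G.Adj i j then x i * x i else 0)
        + (∑ i, ∑ j, if G.Adj i j then x j * x j else 0)
        + 2 * ∑ i, ∑ j, if G.Adj i j then x i * x j else 0 := by
    simp only [Finset.mul_sum, ← Finset.sum_add_distrib]
    refine Finset.sum_congr rfl fun i _ => Finset.sum_congr rfl fun j _ => ?_
    split_ifs <;> ring
  rw [Q_eq, Matrix.add_mulVec, dotProduct_add, hdeg, hadj, hexp, hswap]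
  ring

lemma dotProduct_Q_mono {G H : SimpleGraph V} (h : H ≤ G) (x : V → ℝ) :
    x ⬝ᵥ Q H *ᵥ x ≤ x ⬝ᵥ Q G *ᵥ x := by
  classical
  rw [dotProduct_Q_mulVec, dotProduct_Q_mulVec]
  gcongr with i _ j _
  split_ifs with h1 h2
  · rfl
  · exact absurd (h h1) h2
  · positivity
  · rfl

lemma eigs_nonneg (G : SimpleGraph V) (v : V) : 0 ≤ eigs G v := by
  classical
  have h : (Q G).PosSemidef :=
    Matrix.PosSemidef.of_dotProduct_mulVec_nonneg (Q_isHermitian G) fun x => by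
      rw [star_trivial, dotProduct_Q_mulVec]
      positivity
  exact h.eigenvalues_nonneg v

lemma eigs_mono {G H : SimpleGraph V} (h : H ≤ G) (v : V) : eigs H v ≤ eigs G v :=
  matrix_eigenvalues_le _ _ (dotProduct_Q_mono h) v

lemma sum_eigs (G : SimpleGraph V) [DecidableRel G.Adj] :
    ∑ v, eigs G v = ∑ v, (G.degree v : ℝ) := by
  have ht : (Q G).trace = ∑ v, (G.degree v : ℝ) := by
    rw [Q_eq]
    simp [SimpleGraph.degMatrix, Matrix.trace_add]
  rw [← ht, (Q_isHermitian G).trace_eq_sum_eigenvalues]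
  rfl

lemma sum_eigs_lt {G H : SimpleGraph V} (h : H < G) : ∑ v, eigs H v < ∑ v, eigs G v := by
  classical
  rw [sum_eigs, sum_eigs]
  have hE : H.edgeFinset.card < G.edgeFinset.card :=
    Finset.card_lt_card (SimpleGraph.edgeFinset_ssubset_edgeFinset.2 h)
  have h1 := H.sum_degrees_eq_twice_card_edges
  have h2 := G.sum_degrees_eq_twice_card_edges
  exact_mod_cast (by omega : ∑ v, H.degree v < ∑ v, G.degree v)

/-- For `α ≠ 0` the zero eigenvalues contribute `0 ^ α = 0`, so they may be kept in the sum. -/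
lemma S_eq_sum (G : SimpleGraph V) {α : ℝ} (hα : α ≠ 0) : S α G = ∑ v, eigs G v ^ α := by
  refine Finset.sum_filter_of_ne fun v _ hv h0 => hv ?_
  rw [h0, Real.zero_rpow hα]

theorem S_alpha_lt_of_deleteEdge_pos (G : SimpleGraph V) (e : Sym2 V)
    (he : e ∈ G.edgeSet) (α : ℝ) (hα : 0 < α) :
    S α (G.deleteEdges {e}) < S α G := by
  have hlt : G.deleteEdges {e} < G := by
    refine lt_of_le_of_ne (G.deleteEdges_le {e}) fun h => ?_
    rw [SimpleGraph.deleteEdges_eq_self] at h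
    exact Set.disjoint_singleton_right.1 h he
  rw [S_eq_sum _ hα.ne', S_eq_sum _ hα.ne']
  obtain ⟨v, hv, hv'⟩ := Finset.exists_lt_of_sum_lt (sum_eigs_lt hlt)
  exact Finset.sum_lt_sum
    (fun w _ => Real.rpow_le_rpow (eigs_nonneg _ w) (eigs_mono hlt.le w) hα.le)
    ⟨v, hv, Real.rpow_lt_rpow (eigs_nonneg _ v) hv' hα⟩

end SLP
end
end

section
/- Let G be a connected bipartite finite simple graph on n ≥ 2 vertices and let α < 0 be a real number. Then S_α(G) ≥ n^α + (⌊n/2⌋ − 1)·⌈n/2⌉^α + (⌈n/2⌉ − 1)·⌊n/2⌋^α, with equality if and only if G is the complete bipartite graph K_{⌊n/2⌋,⌈n/2⌉}. -/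
/-!
The idea is to compare `Q G` with the signless Laplacian of the complete bipartite graph on the
same bipartition `R`, `Rᶜ` (sizes `r`, `s`). The latter has the eigenvalues `r + s` (once),
`s` (`r - 1` times), `r` (`s - 1` times) and `0` (once), with explicit eigenspaces, so that the
squared norms `pTop R u`, `pPart R u`, `pPart Rᶜ u` of the projections of a vector `u` onto the
three nonzero eigenspaces are explicit. Since `G` is connected and bipartite, the kernel of `Q G`
is the common kernel, spanned by the signed indicator of the bipartition; hence for a unit
eigenvector of `Q G` with nonzero eigenvalue these three weights are nonnegative and sum to `1`,
and `S α G` is the weighted sum of the powers of the eigenvalues (`exists_weights`).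

Bounding `q ^ α` from below, on each eigenspace, by the tangent line of `x ^ α` at the
corresponding eigenvalue `b` leaves only traces of compressions of `Q G`, all of which are
proportional to the number `e` of edges. This gives (`S_ge`), with `F α r s` the value for the
complete bipartite graph,

  `S α G ≥ F α r s * (1 - α * (1 - e / (r * s)))`.

As `α < 0` and `e ≤ r * s`, this is at least `F α r s`, with equality only if no edge is
missing. Finally `F α r s` strictly decreases as the parts become more balanced
(`F_step`), because `x ^ α` is decreasing and convex. For a complete bipartite graph each
eigenvector has weight only on eigenspaces of its own eigenvalue, so `S α G = F α r s` (`S_eq`).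
-/

open Matrix Finset

noncomputable section

namespace SLP

variable {V : Type*} [Fintype V] [DecidableEq V]

/-! ### The signless Laplacian in coordinates -/

/-- The real 0/1 entries of the adjacency matrix, with classical decidability. -/
def w (G : SimpleGraph V) (x y : V) : ℝ :=
  letI : DecidableRel G.Adj := Classical.decRel _
  if G.Adj x y then 1 else 0

lemma w_of_adj {G : SimpleGraph V} {x y : V} (h : G.Adj x y) : w G x y = 1 := by
  simp [w, h]

lemma w_of_not_adj {G : SimpleGraph V} {x y : V} (h : ¬ G.Adj x y) : w G x y = 0 := by
  simp [w, h]

lemma w_comm (G : SimpleGraph V) (x y : V) : w G x y = w G y x := by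
  by_cases h : G.Adj x y
  · rw [w_of_adj h, w_of_adj h.symm]
  · rw [w_of_not_adj h, w_of_not_adj fun h' => h h'.symm]

lemma w_nonneg (G : SimpleGraph V) (x y : V) : 0 ≤ w G x y := by
  unfold w; split_ifs <;> norm_num

lemma w_le_one (G : SimpleGraph V) (x y : V) : w G x y ≤ 1 := by
  unfold w; split_ifs <;> norm_num

lemma Q_apply (G : SimpleGraph V) (x y : V) :
    Q G x y = (if x = y then ∑ z, w G x z else 0) + w G x y := by
  let _ : DecidableRel G.Adj := Classical.decRel _
  have h : Q G = G.degMatrix ℝ + G.adjMatrix ℝ := rfl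
  rw [h, Matrix.add_apply, SimpleGraph.degMatrix, Matrix.diagonal_apply,
    SimpleGraph.adjMatrix_apply]
  simp [w, ← SimpleGraph.card_neighborFinset_eq_degree, SimpleGraph.neighborFinset_eq_filter]

/-- The spectral theorem for `Q G` in coordinates: `u i` is the unit eigenvector belonging to
`eigs G i`. -/
lemma exists_eigenbasis (G : SimpleGraph V) : ∃ u : V → V → ℝ,
    (∀ x y, ∑ i, u i x * u i y = if x = y then 1 else 0) ∧ (∀ i, ∑ x, u i x ^ 2 = 1) ∧
    ∀ i x, ∑ y, Q G x y * u i y = eigs G i * u i x := by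
  have hH := Q_isHermitian G
  refine ⟨fun i x => hH.eigenvectorBasis i x, ?_, ?_, ?_⟩
  · intro x y
    have h := congrFun (congrFun (Unitary.coe_mul_star_self hH.eigenvectorUnitary) x) y
    simpa [Matrix.mul_apply, Matrix.one_apply, Matrix.star_apply] using h
  · intro i
    have h := hH.eigenvectorBasis.orthonormal.1 i
    have h2 := EuclideanSpace.real_norm_sq_eq (hH.eigenvectorBasis i)
    rw [h] at h2
    simpa using h2.symm
  · intro i x
    have h := congrFun (hH.mulVec_eigenvectorBasis i) x
    simpa [Matrix.mulVec, dotProduct, eigs] using h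

lemma eigen_eq {G : SimpleGraph V} {a : ℝ} {u : V → ℝ}
    (h : ∀ x, ∑ y, Q G x y * u y = a * u x) (x : V) :
    ∑ y, w G x y * (u x + u y) = a * u x := by
  rw [← h x]
  simp only [Q_apply, add_mul, ite_mul, zero_mul, sum_add_distrib, mul_add, sum_mul]
  simp

/-- The quadratic form of `Q G` is the sum of `(u x + u y) ^ 2` over the edges. -/
lemma quad_eq {G : SimpleGraph V} {a : ℝ} {u : V → ℝ} (hu : ∑ x, u x ^ 2 = 1)
    (h : ∀ x, ∑ y, w G x y * (u x + u y) = a * u x) :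
    ∑ x, ∑ y, w G x y * (u x + u y) ^ 2 = 2 * a := by
  have h1 : ∑ x, ∑ y, w G x y * (u x + u y) * u x = a := by
    calc _ = ∑ x, a * u x ^ 2 := by
          refine sum_congr rfl fun x _ => ?_
          rw [← sum_mul, h x]; ring
      _ = a := by rw [← mul_sum, hu, mul_one]
  have h2 : ∑ x, ∑ y, w G x y * (u x + u y) * u y = a := by
    rw [sum_comm, ← h1]
    refine sum_congr rfl fun x _ => sum_congr rfl fun y _ => ?_
    rw [w_comm G y x]; ring
  rw [two_mul]
  nth_rw 1 [← h1]
  rw [← h2, ← sum_add_distrib]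
  refine sum_congr rfl fun x _ => ?_
  rw [← sum_add_distrib]
  refine sum_congr rfl fun y _ => ?_
  ring

lemma eig_nonneg {G : SimpleGraph V} {a : ℝ} {u : V → ℝ} (hu : ∑ x, u x ^ 2 = 1)
    (h : ∀ x, ∑ y, w G x y * (u x + u y) = a * u x) : 0 ≤ a := by
  have := quad_eq hu h
  have h0 : 0 ≤ ∑ x, ∑ y, w G x y * (u x + u y) ^ 2 :=
    sum_nonneg fun x _ => sum_nonneg fun y _ => mul_nonneg (w_nonneg G x y) (sq_nonneg _)
  linarith

/-! ### Bipartitions and the kernel -/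

/-- `R` is one colour class of a bipartition of `G`; the other one is `Rᶜ`. -/
def IsPart (G : SimpleGraph V) (R : Finset V) : Prop :=
  ∀ x y, G.Adj x y → (x ∈ R ↔ y ∉ R)

lemma IsPart.compl {G : SimpleGraph V} {R : Finset V} (h : IsPart G R) : IsPart G Rᶜ := by
  intro x y hxy
  have := h x y hxy
  simp only [mem_compl]
  tauto

/-- A null vector of `Q G` is constant on `R` and takes the opposite value off `R`. -/
lemma kernel {G : SimpleGraph V} (hconn : G.Connected) {R : Finset V} (hR : IsPart G R)
    {u : V → ℝ} (hu : ∑ x, u x ^ 2 = 1)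
    (h : ∀ x, ∑ y, w G x y * (u x + u y) = 0 * u x) :
    ∃ t : ℝ, ∀ x, u x = if x ∈ R then t else -t := by
  have hq := quad_eq hu h
  have hadj : ∀ x y, G.Adj x y → u x = - u y := by
    intro x y hxy
    rw [mul_zero, sum_eq_zero_iff_of_nonneg (fun x _ => sum_nonneg fun y _ =>
      mul_nonneg (w_nonneg G x y) (sq_nonneg _))] at hq
    have h1 := hq x (mem_univ _)
    rw [sum_eq_zero_iff_of_nonneg (fun y _ => mul_nonneg (w_nonneg G x y) (sq_nonneg _))] at h1
    have h2 := h1 y (mem_univ _)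
    rw [w_of_adj hxy, one_mul] at h2
    have := pow_eq_zero_iff (two_ne_zero) |>.1 h2
    linarith
  obtain ⟨x0⟩ := hconn.nonempty
  let v : V → ℝ := fun x => if x ∈ R then u x else - u x
  have hv : ∀ x y, G.Adj x y → v x = v y := by
    intro x y hxy
    have h1 := hR x y hxy
    have h2 := hadj x y hxy
    simp only [v]
    by_cases hx : x ∈ R
    · rw [if_pos hx, if_neg (h1.1 hx), h2]
    · rw [if_neg hx, if_pos (by tauto), h2, neg_neg]
  have hreach : ∀ x y, v x = v y := by
    intro x y
    obtain ⟨p⟩ := hconn.preconnected x y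
    induction p with
    | nil => rfl
    | cons hxy _ ih => exact (hv _ _ hxy).trans ih
  refine ⟨v x0, fun x => ?_⟩
  rw [hreach x0 x]
  simp only [v]
  split_ifs <;> simp

/-- For a nonzero eigenvalue, the eigenvector is orthogonal to the signed indicator of the
bipartition, which spans the kernel. -/
lemma part_sums_eq {G : SimpleGraph V} {R : Finset V} (hR : IsPart G R) {a : ℝ} (ha : a ≠ 0)
    {u : V → ℝ} (h : ∀ x, ∑ y, w G x y * (u x + u y) = a * u x) :
    ∑ x ∈ R, u x = ∑ x ∈ Rᶜ, u x := by
  have key : ∀ T : Finset V, IsPart G T →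
      a * ∑ x ∈ T, u x = ∑ x ∈ T, ∑ y ∈ Tᶜ, w G x y * (u x + u y) := by
    intro T hT
    rw [mul_sum]
    refine sum_congr rfl fun x hx => ?_
    rw [← h x, ← sum_add_sum_compl T]
    rw [sum_eq_zero, zero_add]
    intro y hy
    rw [w_of_not_adj, zero_mul]
    intro hxy
    exact (hT x y hxy).1 hx hy
  apply mul_left_cancel₀ ha
  rw [key R hR, key Rᶜ hR.compl, compl_compl, sum_comm]
  refine sum_congr rfl fun x _ => sum_congr rfl fun y _ => ?_
  rw [w_comm, add_comm]

/-! ### Eigenspace weights of the complete bipartite graph -/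

/-- Squared norm of the projection of `u` onto the eigenvector of the complete bipartite graph
(value `#Rᶜ` on `R`, value `#R` off `R`) for its largest eigenvalue `#R + #Rᶜ`. -/
def pTop (R : Finset V) (u : V → ℝ) : ℝ :=
  (#Rᶜ * ∑ x ∈ R, u x + #R * ∑ x ∈ Rᶜ, u x) ^ 2 / (#R * #Rᶜ * (#R + #Rᶜ))

/-- Squared norm of the projection of `u` onto the vectors supported on `R` with zero sum; these
are eigenvectors of the complete bipartite graph for the eigenvalue `#Rᶜ`. -/
def pPart (R : Finset V) (u : V → ℝ) : ℝ :=
  ∑ x ∈ R, u x ^ 2 - (∑ x ∈ R, u x) ^ 2 / #R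

lemma pTop_nonneg (R : Finset V) (u : V → ℝ) : 0 ≤ pTop R u := by
  unfold pTop; positivity

lemma pPart_nonneg {R : Finset V} (hr : 0 < #R) (u : V → ℝ) : 0 ≤ pPart R u := by
  unfold pPart
  have hr' : (0 : ℝ) < #R := by exact_mod_cast hr
  have := sq_sum_le_card_mul_sum_sq (s := R) (f := u)
  rw [sub_nonneg, div_le_iff₀ hr']
  linarith

lemma p_sum_eq_one {R : Finset V} (hr : 0 < #R) (hs : 0 < #Rᶜ) {u : V → ℝ}
    (hu : ∑ x, u x ^ 2 = 1) (h : ∑ x ∈ R, u x = ∑ x ∈ Rᶜ, u x) :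
    pTop R u + pPart R u + pPart Rᶜ u = 1 := by
  have hr' : (0 : ℝ) < #R := by exact_mod_cast hr
  have hs' : (0 : ℝ) < #Rᶜ := by exact_mod_cast hs
  rw [← sum_add_sum_compl R] at hu
  unfold pTop pPart
  rw [← h, ← hu]
  field_simp
  ring

lemma p_kernel {R : Finset V} (hr : 0 < #R) (hs : 0 < #Rᶜ) {u : V → ℝ} {t : ℝ}
    (h : ∀ x, u x = if x ∈ R then t else -t) :
    pTop R u = 0 ∧ pPart R u = 0 ∧ pPart Rᶜ u = 0 := by
  have hr' : (0 : ℝ) < #R := by exact_mod_cast hr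
  have hs' : (0 : ℝ) < #Rᶜ := by exact_mod_cast hs
  have h1 : ∑ x ∈ R, u x = #R * t := by
    rw [sum_congr rfl (g := fun _ => t) (fun x hx => by rw [h x, if_pos hx])]; simp
  have h2 : ∑ x ∈ Rᶜ, u x = #Rᶜ * (-t) := by
    rw [sum_congr rfl (g := fun _ => -t)
      (fun x hx => by rw [h x, if_neg (mem_compl.1 hx)]), sum_const, nsmul_eq_mul]
  have h3 : ∑ x ∈ R, u x ^ 2 = #R * t ^ 2 := by
    rw [sum_congr rfl (g := fun _ => t ^ 2) (fun x hx => by rw [h x, if_pos hx])]; simp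
  have h4 : ∑ x ∈ Rᶜ, u x ^ 2 = #Rᶜ * t ^ 2 := by
    rw [sum_congr rfl (g := fun _ => t ^ 2)
      (fun x hx => by rw [h x, if_neg (mem_compl.1 hx), neg_sq]), sum_const, nsmul_eq_mul]
  unfold pTop pPart
  rw [h1, h2, h3, h4]
  refine ⟨?_, ?_, ?_⟩
  · ring
  · field_simp; ring
  · field_simp; ring

/-! ### Edge count and traces -/

/-- The number of edges between `R` and its complement, as a real number; for a bipartition `R`
these are all edges of `G`. -/
def numE (G : SimpleGraph V) (R : Finset V) : ℝ := ∑ x ∈ R, ∑ y ∈ Rᶜ, w G x y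

lemma numE_compl (G : SimpleGraph V) (R : Finset V) : numE G Rᶜ = numE G R := by
  unfold numE
  rw [compl_compl, sum_comm]
  exact sum_congr rfl fun x _ => sum_congr rfl fun y _ => w_comm G y x

lemma numE_le (G : SimpleGraph V) (R : Finset V) : numE G R ≤ #R * #Rᶜ := by
  calc numE G R ≤ ∑ x ∈ R, ∑ y ∈ Rᶜ, (1 : ℝ) :=
        sum_le_sum fun x _ => sum_le_sum fun y _ => w_le_one G x y
    _ = _ := by simp only [sum_const, nsmul_eq_mul, mul_one]

lemma adj_of_numE {G : SimpleGraph V} {R : Finset V} (h : numE G R = #R * #Rᶜ) :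
    ∀ x ∈ R, ∀ y ∉ R, G.Adj x y := by
  have h' : ∑ x ∈ R, ∑ y ∈ Rᶜ, w G x y = ∑ x ∈ R, ∑ y ∈ Rᶜ, (1 : ℝ) := by
    simp only [sum_const, nsmul_eq_mul, mul_one]; exact h
  intro x hx y hy
  have h1 := (sum_eq_sum_iff_of_le
    (fun x _ => sum_le_sum fun y _ => w_le_one G x y)).1 h' x hx
  have h2 := (sum_eq_sum_iff_of_le (fun y _ => w_le_one G x y)).1 h1 y (mem_compl.2 hy)
  by_contra hn
  rw [w_of_not_adj hn] at h2
  norm_num at h2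

lemma sum_prod_eq {u : V → V → ℝ} {c : V → ℝ} {M : V → V → ℝ}
    (h : ∀ x y, ∑ i, c i * (u i x * u i y) = M x y) (X Y : Finset V) :
    ∑ i, c i * ((∑ x ∈ X, u i x) * (∑ y ∈ Y, u i y)) = ∑ x ∈ X, ∑ y ∈ Y, M x y := by
  simp only [← h, sum_mul_sum]
  simp only [mul_sum]
  rw [sum_comm]
  exact sum_congr rfl fun x _ => sum_comm

lemma sum_sq_eq {u : V → V → ℝ} {c : V → ℝ} {M : V → V → ℝ}
    (h : ∀ x y, ∑ i, c i * (u i x * u i y) = M x y) (X : Finset V) :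
    ∑ i, c i * (∑ x ∈ X, u i x ^ 2) = ∑ x ∈ X, M x x := by
  simp only [← h, mul_sum]
  rw [sum_comm]
  exact sum_congr rfl fun x _ => sum_congr rfl fun y _ => by ring

/-- `∑ c i * pTop R (u i)` is the trace of `P * M`, where `P` is the projection behind `pTop` and
`M` is the matrix with eigenvectors `u i` and eigenvalues `c i`. -/
lemma sum_pTop {u : V → V → ℝ} {c : V → ℝ} {M : V → V → ℝ}
    (h : ∀ x y, ∑ i, c i * (u i x * u i y) = M x y) (R : Finset V) :
    ∑ i, c i * pTop R (u i) =
      (#Rᶜ ^ 2 * (∑ x ∈ R, ∑ y ∈ R, M x y) + #R * #Rᶜ * (∑ x ∈ R, ∑ y ∈ Rᶜ, M x y)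
        + #R * #Rᶜ * (∑ x ∈ Rᶜ, ∑ y ∈ R, M x y) + #R ^ 2 * (∑ x ∈ Rᶜ, ∑ y ∈ Rᶜ, M x y))
      / (#R * #Rᶜ * (#R + #Rᶜ)) := by
  rw [← sum_prod_eq h, ← sum_prod_eq h, ← sum_prod_eq h, ← sum_prod_eq h]
  simp only [mul_sum, ← sum_add_distrib, sum_div]
  refine sum_congr rfl fun i _ => ?_
  simp only [← mul_sum]
  unfold pTop
  ring

lemma sum_pPart {u : V → V → ℝ} {c : V → ℝ} {M : V → V → ℝ}
    (h : ∀ x y, ∑ i, c i * (u i x * u i y) = M x y) (R : Finset V) :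
    ∑ i, c i * pPart R (u i) = ∑ x ∈ R, M x x - (∑ x ∈ R, ∑ y ∈ R, M x y) / #R := by
  rw [← sum_prod_eq h, ← sum_sq_eq h, sum_div, ← sum_sub_distrib]
  refine sum_congr rfl fun i _ => ?_
  unfold pPart
  ring

lemma Q_part {G : SimpleGraph V} {R : Finset V} (hR : IsPart G R) {x y : V} (hx : x ∈ R)
    (hy : y ∈ R) : Q G x y = if x = y then ∑ z ∈ Rᶜ, w G x z else 0 := by
  have hz : ∀ z ∈ R, w G x z = 0 := fun z hz => w_of_not_adj fun ha => (hR x z ha).1 hx hz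
  rw [Q_apply, hz y hy, add_zero, ← sum_add_sum_compl R, sum_eq_zero hz, zero_add]

lemma sum_Q_diag {G : SimpleGraph V} {R : Finset V} (hR : IsPart G R) :
    ∑ x ∈ R, Q G x x = numE G R :=
  sum_congr rfl fun x hx => by rw [Q_part hR hx hx, if_pos rfl]

lemma sum_Q_part {G : SimpleGraph V} {R : Finset V} (hR : IsPart G R) :
    ∑ x ∈ R, ∑ y ∈ R, Q G x y = numE G R := by
  refine sum_congr rfl fun x hx => ?_
  rw [sum_congr rfl fun y hy => Q_part hR hx hy]
  simp [hx]

lemma sum_Q_cross (G : SimpleGraph V) (R : Finset V) :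
    ∑ x ∈ R, ∑ y ∈ Rᶜ, Q G x y = numE G R := by
  refine sum_congr rfl fun x hx => sum_congr rfl fun y hy => ?_
  rw [Q_apply, if_neg, zero_add]
  rintro rfl
  exact mem_compl.1 hy hx

/-! ### Comparison with the complete bipartite graph -/

/-- The value of `S α` on the complete bipartite graph with parts of sizes `r` and `s`. -/
def F (α : ℝ) (r s : ℕ) : ℝ :=
  ((r : ℝ) + s) ^ α + ((r : ℝ) - 1) * (s : ℝ) ^ α + ((s : ℝ) - 1) * (r : ℝ) ^ α

lemma F_pos {α : ℝ} {r s : ℕ} (hr : 0 < r) (hs : 0 < s) : 0 < F α r s := by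
  have hr' : (1 : ℝ) ≤ r := by exact_mod_cast hr
  have hs' : (1 : ℝ) ≤ s := by exact_mod_cast hs
  unfold F
  have h1 : 0 < ((r : ℝ) + s) ^ α := Real.rpow_pos_of_pos (by linarith) _
  have h2 : 0 ≤ ((r : ℝ) - 1) * (s : ℝ) ^ α := mul_nonneg (by linarith) (by positivity)
  have h3 : 0 ≤ ((s : ℝ) - 1) * (r : ℝ) ^ α := mul_nonneg (by linarith) (by positivity)
  linarith

/-- The graph of `t ↦ t ^ α` lies above its tangent line at `b`, for negative `α`. -/
lemma tangent {α : ℝ} (hα : α < 0) {a b : ℝ} (ha : 0 < a) (hb : 0 < b) :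
    b ^ α + α * b ^ α / b * (a - b) ≤ a ^ α := by
  have h1 : 1 + α * (a / b - 1) ≤ (a / b) ^ α := by
    have hab : 0 < a / b := div_pos ha hb
    rw [Real.rpow_def_of_pos hab]
    have h2 := Real.add_one_le_exp (Real.log (a / b) * α)
    have h3 := Real.log_le_sub_one_of_pos hab
    nlinarith
  rw [Real.div_rpow ha.le hb.le, le_div_iff₀ (Real.rpow_pos_of_pos hb α)] at h1
  calc _ = (1 + α * (a / b - 1)) * b ^ α := by field_simp
    _ ≤ _ := h1

/-- Expands `S α G` along the three nonzero eigenspaces of the complete bipartite graph on the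
same bipartition. The total weights of the eigenspaces are their dimensions, and the weighted
eigenvalue sums are the traces of the corresponding compressions of `Q G`. -/
lemma exists_weights {G : SimpleGraph V} (hconn : G.Connected) {R : Finset V}
    (hR : IsPart G R) (hr : 0 < #R) (hs : 0 < #Rᶜ) : ∃ u : V → V → ℝ,
    (∀ i x, ∑ y, w G x y * (u i x + u i y) = eigs G i * u i x) ∧
    (∀ i, 0 ≤ eigs G i) ∧
    (∀ α, S α G = ∑ i with eigs G i ≠ 0,
      eigs G i ^ α * (pTop R (u i) + pPart R (u i) + pPart Rᶜ (u i))) ∧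
    ∑ i with eigs G i ≠ 0, pTop R (u i) = 1 ∧
    ∑ i with eigs G i ≠ 0, pPart R (u i) = #R - 1 ∧
    ∑ i with eigs G i ≠ 0, pPart Rᶜ (u i) = #Rᶜ - 1 ∧
    ∑ i with eigs G i ≠ 0, eigs G i * pTop R (u i)
      = (#R + #Rᶜ) * (numE G R / (#R * #Rᶜ)) ∧
    ∑ i with eigs G i ≠ 0, eigs G i * pPart R (u i)
      = #Rᶜ * (#R - 1) * (numE G R / (#R * #Rᶜ)) ∧
    ∑ i with eigs G i ≠ 0, eigs G i * pPart Rᶜ (u i)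
      = #R * (#Rᶜ - 1) * (numE G R / (#R * #Rᶜ)) := by
  have hr' : (0 : ℝ) < #R := by exact_mod_cast hr
  have hs' : (0 : ℝ) < #Rᶜ := by exact_mod_cast hs
  obtain ⟨u, h1, h2, h3⟩ := exists_eigenbasis G
  have h4 : ∀ i x, ∑ y, w G x y * (u i x + u i y) = eigs G i * u i x :=
    fun i => eigen_eq (h3 i)
  have h0 : ∀ i, eigs G i = 0 → pTop R (u i) = 0 ∧ pPart R (u i) = 0 ∧ pPart Rᶜ (u i) = 0 := by
    intro i hi
    obtain ⟨t, ht⟩ := kernel hconn hR (h2 i) (by simpa only [hi] using h4 i)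
    exact p_kernel hr hs ht
  have hone : ∀ x y, ∑ i, (fun _ : V => (1 : ℝ)) i * (u i x * u i y)
      = (fun x y : V => if x = y then (1 : ℝ) else 0) x y := by simpa using h1
  have hQ : ∀ x y, ∑ i, eigs G i * (u i x * u i y) = Q G x y := by
    intro x y
    calc _ = ∑ i, ∑ z, Q G x z * (u i z * u i y) := by
          refine sum_congr rfl fun i _ => ?_
          rw [← mul_assoc, ← h3 i x, sum_mul]
          exact sum_congr rfl fun z _ => by ring
      _ = Q G x y := by
          rw [sum_comm]
          simp only [← mul_sum, h1]
          simp
  have hcross : ∀ T : Finset V,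
      ∑ x ∈ T, ∑ y ∈ Tᶜ, (if x = y then (1 : ℝ) else 0) = 0 := by
    intro T
    refine sum_eq_zero fun x hx => sum_eq_zero fun y hy => if_neg ?_
    rintro rfl
    exact mem_compl.1 hy hx
  have hdiag : ∀ T : Finset V,
      ∑ x ∈ T, ∑ y ∈ T, (if x = y then (1 : ℝ) else 0) = #T := by
    intro T
    rw [sum_congr rfl (g := fun _ => (1 : ℝ)) (fun x hx => by simp [hx])]
    simp
  have hcross1 := hcross Rᶜ
  have hcross2 := sum_Q_cross G Rᶜ
  rw [compl_compl] at hcross1 hcross2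
  rw [numE_compl] at hcross2
  have hdrop : ∀ f : V → ℝ, (∀ i, eigs G i = 0 → f i = 0) →
      ∑ i with eigs G i ≠ 0, f i = ∑ i, f i :=
    fun f hf => sum_filter_of_ne fun i _ h hi => h (hf i hi)
  refine ⟨u, h4, fun i => eig_nonneg (h2 i) (h4 i), ?_, ?_, ?_, ?_, ?_, ?_, ?_⟩
  · intro α
    unfold S
    refine sum_congr rfl fun i hi => ?_
    rw [p_sum_eq_one hr hs (h2 i) (part_sums_eq hR (mem_filter.1 hi).2 (h4 i)), mul_one]
  · rw [hdrop _ fun i hi => (h0 i hi).1]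
    have := sum_pTop hone R
    simp only [hdiag, hcross, hcross1, one_mul] at this
    rw [this]; field_simp; ring
  · rw [hdrop _ fun i hi => (h0 i hi).2.1]
    have := sum_pPart hone R
    simp only [hdiag, ↓reduceIte, sum_const, nsmul_eq_mul, mul_one, one_mul] at this
    rw [this]; field_simp
  · rw [hdrop _ fun i hi => (h0 i hi).2.2]
    have := sum_pPart hone Rᶜ
    simp only [hdiag, ↓reduceIte, sum_const, nsmul_eq_mul, mul_one, one_mul] at this
    rw [this]; field_simp
  · rw [hdrop _ (fun i hi => by rw [hi, zero_mul]), sum_pTop hQ,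
      sum_Q_part hR, sum_Q_part hR.compl, sum_Q_cross, hcross2, numE_compl]
    field_simp; ring
  · rw [hdrop _ (fun i hi => by rw [hi, zero_mul]), sum_pPart hQ,
      sum_Q_part hR, sum_Q_diag hR]
    field_simp
  · rw [hdrop _ (fun i hi => by rw [hi, zero_mul]), sum_pPart hQ,
      sum_Q_part hR.compl, sum_Q_diag hR.compl, numE_compl]
    field_simp

/-- Comparison with the complete bipartite graph on the same bipartition; the excess is controlled
by the proportion of missing edges. -/
lemma S_ge {G : SimpleGraph V} (hconn : G.Connected) {R : Finset V}
    (hR : IsPart G R) (hr : 0 < #R) (hs : 0 < #Rᶜ) {α : ℝ} (hα : α < 0) :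
    F α #R #Rᶜ * (1 - α * (1 - numE G R / (#R * #Rᶜ))) ≤ S α G := by
  have hr' : (0 : ℝ) < #R := by exact_mod_cast hr
  have hs' : (0 : ℝ) < #Rᶜ := by exact_mod_cast hs
  obtain ⟨u, -, hnn, hS, a1, a2, a3, b1, b2, b3⟩ := exists_weights hconn hR hr hs
  -- each weight of `eigs G i` is estimated by the tangent line at the eigenvalue of its eigenspace
  have key : ∀ (p : V → ℝ) (b : ℝ), 0 < b → (∀ i, 0 ≤ p i) →
      b ^ α * (∑ i with eigs G i ≠ 0, p i) + α * b ^ α / b *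
        (∑ i with eigs G i ≠ 0, eigs G i * p i - b * ∑ i with eigs G i ≠ 0, p i)
      ≤ ∑ i with eigs G i ≠ 0, eigs G i ^ α * p i := by
    intro p b hb hp
    simp only [mul_sum, ← sum_sub_distrib, ← sum_add_distrib]
    refine sum_le_sum fun i hi => ?_
    have ha : 0 < eigs G i := lt_of_le_of_ne (hnn i) (mem_filter.1 hi).2.symm
    have := mul_le_mul_of_nonneg_right (tangent hα ha hb) (hp i)
    linarith
  have k1 := key (fun i => pTop R (u i)) (#R + #Rᶜ) (by positivity) (fun i => pTop_nonneg R _)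
  have k2 := key (fun i => pPart R (u i)) #Rᶜ hs' (fun i => pPart_nonneg hr _)
  have k3 := key (fun i => pPart Rᶜ (u i)) #R hr' (fun i => pPart_nonneg hs _)
  simp only [a1, a2, a3, b1, b2, b3] at k1 k2 k3
  rw [hS]
  simp only [mul_add, sum_add_distrib]
  refine le_trans (le_of_eq ?_) (add_le_add (add_le_add k1 k2) k3)
  unfold F
  field_simp
  ring

/-- Every eigenvector of a complete bipartite graph has weight only on the eigenspaces of its own
eigenvalue, so the expansion of `S α G` collapses. -/
lemma S_eq {G : SimpleGraph V} (hconn : G.Connected) {R : Finset V}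
    (hR : ∀ x y, G.Adj x y ↔ (x ∈ R ↔ y ∉ R)) (hr : 0 < #R) (hs : 0 < #Rᶜ) (α : ℝ) :
    S α G = F α #R #Rᶜ := by
  have hr' : (0 : ℝ) < #R := by exact_mod_cast hr
  have hs' : (0 : ℝ) < #Rᶜ := by exact_mod_cast hs
  have hpart : IsPart G R := fun x y => (hR x y).1
  obtain ⟨u, hu, -, hS, a1, a2, a3, -⟩ := exists_weights hconn hpart hr hs
  -- the eigenvalue equation at a vertex of a part
  have eq : ∀ T : Finset V, (∀ x y, G.Adj x y ↔ (x ∈ T ↔ y ∉ T)) → ∀ i, ∀ x ∈ T,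
      (eigs G i - #Tᶜ) * u i x = ∑ y ∈ Tᶜ, u i y := by
    intro T hT i x hx
    rw [sub_mul, ← hu i x, ← sum_add_sum_compl T,
      sum_eq_zero (s := T) (fun y hy => by
        rw [w_of_not_adj (fun h => ((hT x y).1 h).1 hx hy), zero_mul]),
      sum_congr rfl (fun y hy => by
        rw [w_of_adj ((hT x y).2 ⟨fun _ => mem_compl.1 hy, fun _ => hx⟩), one_mul]),
      sum_add_distrib, sum_const, nsmul_eq_mul]
    ring
  have eqs : ∀ T : Finset V, (∀ x y, G.Adj x y ↔ (x ∈ T ↔ y ∉ T)) → ∀ i,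
      (eigs G i - #Tᶜ) * ∑ x ∈ T, u i x = #T * ∑ y ∈ Tᶜ, u i y := by
    intro T hT i
    rw [mul_sum, sum_congr rfl (eq T hT i), sum_const, nsmul_eq_mul]
  have eqp : ∀ T : Finset V, 0 < #T → (∀ x y, G.Adj x y ↔ (x ∈ T ↔ y ∉ T)) → ∀ i,
      (eigs G i - #Tᶜ) * pPart T (u i) = 0 := by
    intro T hT0 hT i
    have hT0' : (#T : ℝ) ≠ 0 := by exact_mod_cast hT0.ne'
    have e1 : (eigs G i - #Tᶜ) * ∑ x ∈ T, u i x ^ 2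
        = (∑ x ∈ T, u i x) * ∑ y ∈ Tᶜ, u i y := by
      rw [mul_sum, sum_mul]
      refine sum_congr rfl fun x hx => ?_
      rw [← eq T hT i x hx]; ring
    unfold pPart
    rw [mul_sub, e1]
    have e2 := eqs T hT i
    field_simp
    linear_combination (-(∑ x ∈ T, u i x)) * e2
  have hRc : ∀ x y, G.Adj x y ↔ (x ∈ Rᶜ ↔ y ∉ Rᶜ) := by
    intro x y
    rw [hR x y]
    simp only [mem_compl]
    tauto
  have e1 := eqp R hr hR
  have e2 := eqp Rᶜ hs hRc
  have e3 : ∀ i, (eigs G i - (#R + #Rᶜ)) * pTop R (u i) = 0 := by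
    intro i
    have f1 := eqs R hR i
    have f2 := eqs Rᶜ hRc i
    rw [compl_compl] at f2
    unfold pTop
    have : (eigs G i - (#R + #Rᶜ)) * (#Rᶜ * ∑ x ∈ R, u i x + #R * ∑ x ∈ Rᶜ, u i x) = 0 := by
      linear_combination (#Rᶜ : ℝ) * f1 + (#R : ℝ) * f2
    rw [sq, mul_div_assoc', ← mul_assoc, this, zero_mul, zero_div]
  rw [compl_compl] at e2
  have pw : ∀ a b p : ℝ, (a - b) * p = 0 → a ^ α * p = b ^ α * p := by
    intro a b p h
    rcases mul_eq_zero.1 h with h | h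
    · rw [sub_eq_zero.1 h]
    · rw [h, mul_zero, mul_zero]
  rw [hS]
  simp only [mul_add, sum_add_distrib]
  simp only [fun i => pw _ _ _ (e1 i), fun i => pw _ _ _ (e2 i), fun i => pw _ _ _ (e3 i),
    ← mul_sum, a1, a2, a3]
  unfold F
  ring

/-! ### Balancing the parts -/

/-- Moving one vertex from the larger part to the smaller one decreases `F`. -/
lemma F_step {α : ℝ} (hα : α < 0) {r t : ℕ} (hr : 0 < r) (hrt : r + 1 ≤ t) :
    F α (r + 1) t < F α r (t + 1) := by
  have hr' : (1 : ℝ) ≤ r := by exact_mod_cast hr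
  have hrt' : (r : ℝ) + 1 ≤ t := by exact_mod_cast hrt
  have hlt : (t : ℝ) ^ α < (r : ℝ) ^ α :=
    Real.rpow_lt_rpow_of_neg (by linarith) (by linarith) hα
  have hlt2 : ((t : ℝ) + 1) ^ α ≤ (t : ℝ) ^ α :=
    (Real.rpow_lt_rpow_of_neg (by linarith) (by linarith) hα).le
  have hle : (t : ℝ) ^ α ≤ ((r : ℝ) + 1) ^ α :=
    Real.rpow_le_rpow_of_nonpos (by linarith) hrt' hα.le
  have hpos : 0 < (t : ℝ) ^ α := Real.rpow_pos_of_pos (by linarith) _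
  have t1 := tangent hα (a := r) (b := (r : ℝ) + 1) (by linarith) (by linarith)
  have t2 := tangent hα (a := (t : ℝ) + 1) (b := t) (by linarith) (by linarith)
  -- the slope of `x ^ α` increases from `r + 1` to `t`
  have hslope : α * ((r : ℝ) + 1) ^ α / ((r : ℝ) + 1) ≤ α * (t : ℝ) ^ α / t := by
    have : (t : ℝ) ^ α / t ≤ ((r : ℝ) + 1) ^ α / ((r : ℝ) + 1) :=
      div_le_div₀ (hpos.le.trans hle) hle (by linarith) hrt'
    rw [mul_div_assoc, mul_div_assoc]
    exact mul_le_mul_of_nonpos_left this hα.le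
  have hconv : (t : ℝ) ^ α - ((t : ℝ) + 1) ^ α ≤ (r : ℝ) ^ α - ((r : ℝ) + 1) ^ α := by
    linarith
  unfold F
  push_cast
  rw [show (r : ℝ) + 1 + t = r + (t + 1) by ring]
  have h1 := mul_le_mul_of_nonneg_left hconv (show (0 : ℝ) ≤ t - 1 by linarith)
  have h2 := mul_le_mul_of_nonneg_right (show (r : ℝ) - 1 ≤ t - 1 by linarith)
    (show 0 ≤ (t : ℝ) ^ α - ((t : ℝ) + 1) ^ α by linarith)
  linarith

lemma F_lt {α : ℝ} (hα : α < 0) {r t k : ℕ} (hr : 0 < r) (hrt : r + (k + 1) ≤ t) :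
    F α (r + (k + 1)) t < F α r (t + (k + 1)) := by
  induction k generalizing t with
  | zero => exact F_step hα hr hrt
  | succ k ih =>
    have h1 := F_step hα (r := r + (k + 1)) (t := t) (by omega) (by omega)
    have h2 := ih (t := t + 1) (by omega)
    rw [show t + (k + 1 + 1) = t + 1 + (k + 1) by omega]
    exact h1.trans h2

lemma F_balanced {α : ℝ} (hα : α < 0) {r s : ℕ} (hr : 0 < r) (hrs : r ≤ s) :
    F α ((r + s) / 2) ((r + s + 1) / 2) ≤ F α r s ∧
    (F α r s = F α ((r + s) / 2) ((r + s + 1) / 2) → r = (r + s) / 2) := by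
  by_cases h : r = (r + s) / 2
  · have hs : s = (r + s + 1) / 2 := by omega
    refine ⟨?_, fun _ => h⟩
    rw [← h, ← hs]
  · obtain ⟨k, hk⟩ : ∃ k, (r + s) / 2 = r + (k + 1) := ⟨(r + s) / 2 - r - 1, by omega⟩
    have h1 := F_lt hα (r := r) (t := (r + s + 1) / 2) (k := k) hr (by omega)
    rw [← hk, show (r + s + 1) / 2 + (k + 1) = s by omega] at h1
    exact ⟨h1.le, fun h2 => absurd h2 h1.ne'⟩

/-! ### Bipartitions and isomorphisms -/

lemma exists_part {G : SimpleGraph V} (hcol : G.Colorable 2) :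
    ∃ R : Finset V, IsPart G R ∧ #R ≤ #Rᶜ := by
  obtain ⟨c⟩ := hcol
  have h : IsPart G ({x | c x = 0} : Finset V) := by
    intro x y hxy
    have := c.valid hxy
    simp only [mem_filter, mem_univ, true_and]
    omega
  rcases le_total #({x | c x = 0} : Finset V) #({x | c x = 0} : Finset V)ᶜ with hle | hle
  · exact ⟨_, h, hle⟩
  · exact ⟨_, h.compl, by rwa [compl_compl]⟩

lemma part_pos {G : SimpleGraph V} (hcard : 2 ≤ Fintype.card V) (hconn : G.Connected)
    {R : Finset V} (hR : IsPart G R) : 0 < #R ∧ 0 < #Rᶜ := by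
  have : Nontrivial V := Fintype.one_lt_card_iff_nontrivial.1 (by omega)
  obtain ⟨x⟩ := hconn.nonempty
  obtain ⟨y, hy⟩ := hconn.preconnected.exists_adj_of_nontrivial x
  have h := hR x y hy
  by_cases hx : x ∈ R
  · exact ⟨card_pos.2 ⟨x, hx⟩, card_pos.2 ⟨y, mem_compl.2 (h.1 hx)⟩⟩
  · exact ⟨card_pos.2 ⟨y, by tauto⟩, card_pos.2 ⟨x, mem_compl.2 hx⟩⟩

lemma nonempty_iso {G : SimpleGraph V} {R : Finset V}
    (hR : ∀ x y, G.Adj x y ↔ (x ∈ R ↔ y ∉ R)) {a b : ℕ} (ha : #R = a) (hb : #Rᶜ = b) :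
    Nonempty (G ≃g completeBipartiteGraph (Fin a) (Fin b)) := by
  have ha' : Fintype.card {x // x ∈ R} = a := by rw [Fintype.card_coe, ha]
  have hb' : Fintype.card {x // x ∉ R} = b := by
    rw [← hb, ← Fintype.card_coe]
    exact Fintype.card_congr (Equiv.subtypeEquivRight fun x => mem_compl.symm)
  let e : {x // x ∈ R} ⊕ {x // x ∉ R} ≃ V := Equiv.sumCompl (· ∈ R)
  let f : {x // x ∈ R} ⊕ {x // x ∉ R} ≃ Fin a ⊕ Fin b :=
    Equiv.sumCongr (Fintype.equivFinOfCardEq ha') (Fintype.equivFinOfCardEq hb')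
  have key : ∀ p q, G.Adj (e p) (e q) ↔ (completeBipartiteGraph (Fin a) (Fin b)).Adj (f p) (f q) := by
    rintro (⟨p, hp⟩ | ⟨p, hp⟩) (⟨q, hq⟩ | ⟨q, hq⟩) <;> simp [e, f, hR, hp, hq]
  refine ⟨⟨e.symm.trans f, ?_⟩⟩
  intro x y
  have := key (e.symm x) (e.symm y)
  simpa using this.symm

lemma exists_part_of_iso {G : SimpleGraph V} {a b : ℕ}
    (f : G ≃g completeBipartiteGraph (Fin a) (Fin b)) :
    ∃ R : Finset V, (∀ x y, G.Adj x y ↔ (x ∈ R ↔ y ∉ R)) ∧ #R = a ∧ #Rᶜ = b := by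
  let R : Finset V := {x | (f x).isLeft}
  have hR : #R = a := by
    have : R = (univ.map Function.Embedding.inl).map f.symm.toEquiv.toEmbedding := by
      ext x
      simp only [R, mem_filter, mem_univ, true_and, mem_map, Sum.isLeft_iff]
      constructor
      · rintro ⟨y, hy⟩
        exact ⟨Sum.inl y, ⟨y, rfl⟩, by rw [← hy]; exact f.symm_apply_apply x⟩
      · rintro ⟨_, ⟨y, rfl⟩, hx⟩
        exact ⟨y, by rw [← hx]; exact f.apply_symm_apply _⟩
    rw [this, card_map, card_map, card_univ, Fintype.card_fin]
  refine ⟨R, fun x y => ?_, hR, ?_⟩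
  · rw [← f.map_adj_iff]
    simp only [R, mem_filter, mem_univ, true_and, completeBipartiteGraph_adj]
    rcases f x with p | p <;> rcases f y with q | q <;> simp
  · have := Fintype.card_congr f.toEquiv
    simp only [Fintype.card_sum, Fintype.card_fin] at this
    rw [card_compl, hR, this]
    omega

theorem S_alpha_ge_balanced_bipartite_neg {n : ℕ} (hn : 2 ≤ n)
    (hcard : Fintype.card V = n) (G : SimpleGraph V) (hconn : G.Connected)
    (hbip : G.Colorable 2) (α : ℝ) (hα : α < 0) :
    (n : ℝ) ^ α + (((n / 2 : ℕ) : ℝ) - 1) * (((n + 1) / 2 : ℕ) : ℝ) ^ α + ((((n + 1) / 2 : ℕ) : ℝ) - 1) * ((n / 2 : ℕ) : ℝ) ^ α ≤ S α G ∧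
    (S α G = (n : ℝ) ^ α + (((n / 2 : ℕ) : ℝ) - 1) * (((n + 1) / 2 : ℕ) : ℝ) ^ α + ((((n + 1) / 2 : ℕ) : ℝ) - 1) * ((n / 2 : ℕ) : ℝ) ^ α ↔
      Nonempty (G ≃g completeBipartiteGraph (Fin (n / 2)) (Fin ((n + 1) / 2)))) := by
  have hF : (n : ℝ) ^ α + (((n / 2 : ℕ) : ℝ) - 1) * (((n + 1) / 2 : ℕ) : ℝ) ^ α
      + ((((n + 1) / 2 : ℕ) : ℝ) - 1) * ((n / 2 : ℕ) : ℝ) ^ α = F α (n / 2) ((n + 1) / 2) := by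
    have : ((n / 2 : ℕ) : ℝ) + ((n + 1) / 2 : ℕ) = n := by
      rw [← Nat.cast_add]
      congr 1
      omega
    unfold F
    rw [this]
  rw [hF]
  obtain ⟨R, hR, hle⟩ := exists_part hbip
  obtain ⟨hr, hs⟩ := part_pos (hcard ▸ hn) hconn hR
  have hsum : #R + #Rᶜ = n := by rw [card_add_card_compl, hcard]
  have hr' : (0 : ℝ) < #R := by exact_mod_cast hr
  have hs' : (0 : ℝ) < #Rᶜ := by exact_mod_cast hs
  have hS := S_ge hconn hR hr hs hα
  have hbal := F_balanced hα hr hle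
  rw [hsum] at hbal
  have hFpos : 0 < F α #R #Rᶜ := F_pos hr hs
  set δ : ℝ := 1 - numE G R / (#R * #Rᶜ) with hδ
  have hδ0 : 0 ≤ δ := by
    rw [hδ, sub_nonneg, div_le_one (by positivity)]
    exact numE_le G R
  have hgap : F α #R #Rᶜ + F α #R #Rᶜ * (-α * δ) ≤ S α G := by linarith
  have hextra : 0 ≤ F α #R #Rᶜ * (-α * δ) :=
    mul_nonneg hFpos.le (mul_nonneg (by linarith) hδ0)
  refine ⟨by linarith [hbal.1], fun h => ?_, ?_⟩
  · have hrn := hbal.2 (by linarith [hbal.1])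
    have hzero : F α #R #Rᶜ * (-α * δ) = 0 := by linarith [hbal.1]
    have hδz : δ = 0 := by
      rcases mul_eq_zero.1 hzero with h1 | h1
      · exact absurd h1 hFpos.ne'
      · exact (mul_eq_zero.1 h1).resolve_left (by linarith)
    have he : numE G R = #R * #Rᶜ := by
      have : numE G R / (#R * #Rᶜ) = 1 := by linarith
      rwa [div_eq_one_iff_eq (by positivity)] at this
    have hadj := adj_of_numE he
    refine nonempty_iso (R := R) (fun x y => ⟨hR x y, fun hxy => ?_⟩) hrn (by omega)
    by_cases hx : x ∈ R
    · exact hadj x hx y (hxy.1 hx)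
    · exact (hadj y (by tauto) x hx).symm
  · rintro ⟨f⟩
    obtain ⟨T, hT, ha, hb⟩ := exists_part_of_iso f
    obtain ⟨hr2, hs2⟩ := part_pos (hcard ▸ hn) hconn (R := T) fun x y => (hT x y).1
    rw [S_eq hconn hT hr2 hs2, ha, hb]

end SLP
end
end

section
/- Let n, k, i be positive integers with 1 ≤ k, 1 ≤ i ≤ ⌊(n−k)/2⌋, and let G(i) = K_k ∨ (K_i ∪ K_{n−k−i}). Then the multiset of eigenvalues of the signless Laplacian Q(G(i)) is { q_1(i), n−2, q_3(i) } together with n−2 repeated k−1 times, k+i−2 repeated i−1 times, and n−i−2 repeated n−k−i−1 times, where q_1(i) = n−2+k/2 + (1/2)·√((k−2n)² + 16i(k−n+i)) and q_3(i) = n−2+k/2 − (1/2)·√((k−2n)² + 16i(k−n+i)). -/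
/-!
The vertices of `K_k ∨ (K_i ∪ K_m)`, where `m = n - k - i`, fall into three cells, and `Q` is a
diagonal matrix constant on cells (with values `a = n - 2`, `b = k + i - 2`, `c = n - i - 2`) plus
a matrix depending only on the cells of its two indices (`Q_apply`). The second summand factors
through a three-dimensional space, so for `x` outside `{a, b, c}` Sylvester's determinant identity
turns `det (x - Q)` into `(x - a) ^ k (x - b) ^ i (x - c) ^ m` times a `3 × 3` determinant
(`det_sub_cells`), which equals `(x - q₁) (x - q₃) / ((x - b) (x - c))` (`det_quotient`). Hence the
characteristic polynomial of `Q` agrees at all but finitely many `x` with the product of `X - λ`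
over the claimed multiset; the two polynomials are equal, and so are their multisets of roots. The
remaining point is that the radicand in `q₁` and `q₃` is nonnegative.
-/

open Matrix Finset

noncomputable section

namespace SLP

variable {V : Type*} [Fintype V] [DecidableEq V]

/-- The join `G ∨ H` of two graphs: the disjoint union together with all edges
joining a vertex of `G` to a vertex of `H`. -/
def join {α β : Type*} (G : SimpleGraph α) (H : SimpleGraph β) : SimpleGraph (α ⊕ β) :=
  (Gᶜ ⊕g Hᶜ)ᶜ

/-- The graph `G(i) = K_k ∨ (K_i ∪ K_{n-k-i})`. -/
def Gik (n k i : ℕ) : SimpleGraph (Fin k ⊕ (Fin i ⊕ Fin (n - k - i))) :=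
  join (⊤ : SimpleGraph (Fin k))
    ((⊤ : SimpleGraph (Fin i)) ⊕g (⊤ : SimpleGraph (Fin (n - k - i))))

/-- The cell (`0`, `1` or `2`) of the partition `K_k`, `K_i`, `K_m` that contains a vertex. -/
def cell (k i m : ℕ) : Fin k ⊕ (Fin i ⊕ Fin m) → Fin 3 :=
  Sum.elim (fun _ => 0) (Sum.elim (fun _ => 1) (fun _ => 2))

/-- The adjacency pattern of the three cells: the first is joined to everything, the other two
are cliques with no edge between them. -/
def pattern : Matrix (Fin 3) (Fin 3) ℝ := !![1, 1, 1; 1, 1, 0; 1, 0, 1]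

/-- A diagonal matrix plus a matrix that depends only on cells is a rank-three perturbation, so
its characteristic determinant reduces to a `3 × 3` one by Sylvester's identity
`det (1 - PR) = det (1 - RP)`. -/
lemma det_sub_cells (k i m : ℕ) (d : Fin 3 → ℝ) (B : Matrix (Fin 3) (Fin 3) ℝ) (x : ℝ)
    (hx : ∀ j, x - d j ≠ 0) :
    (Matrix.of fun v w => (if v = w then x - d (cell k i m v) else 0)
        - B (cell k i m v) (cell k i m w)).det
      = (x - d 0) ^ k * (x - d 1) ^ i * (x - d 2) ^ m
        * (1 - Matrix.of fun j l => B j l * ((![(k : ℝ), i, m] l) / (x - d l))).det := by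
  set t := cell k i m with ht
  let P : Matrix (Fin k ⊕ (Fin i ⊕ Fin m)) (Fin 3) ℝ :=
    Matrix.of fun v j => if t v = j then (x - d j)⁻¹ else 0
  let R : Matrix (Fin 3) (Fin k ⊕ (Fin i ⊕ Fin m)) ℝ := Matrix.of fun j v => B j (t v)
  have h1 : (Matrix.of fun v w => (if v = w then x - d (t v) else 0) - B (t v) (t w))
      = Matrix.diagonal (fun v => x - d (t v)) * (1 - P * R) := by
    ext v w
    have hPR : (P * R) v w = (x - d (t v))⁻¹ * B (t v) (t w) := by
      simp [P, R, Matrix.mul_apply]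
    rw [Matrix.diagonal_mul, Matrix.sub_apply, hPR, Matrix.one_apply, mul_sub,
      mul_inv_cancel_left₀ (hx _)]
    simp
  have h2 : R * P = Matrix.of fun j l => B j l * ((![(k : ℝ), i, m] l) / (x - d l)) := by
    ext j l
    fin_cases l <;> simp [P, R, Matrix.mul_apply, ht, cell] <;> ring
  rw [h1, Matrix.det_mul, Matrix.det_diagonal, Matrix.det_one_sub_mul_comm, h2]
  simp [ht, cell, mul_assoc]

/-- Within a cell all degrees agree, and `Q` is the sum of a diagonal matrix constant on cells
and the cell pattern. The diagonal entries are the degrees minus one, because the pattern already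
contributes `1` there. -/
lemma Q_apply_s11 (n k i m : ℕ) (hn : n - k - i = m) (hn' : n = k + i + m) (v w) :
    Q (Gik n k i) v w
      = (if v = w then ![(n : ℝ) - 2, (k : ℝ) + i - 2, (n : ℝ) - i - 2]
          (cell k i (n - k - i) v) else 0)
        + pattern (cell k i (n - k - i) v) (cell k i (n - k - i) w) := by
  classical
  have hadj : ∀ v w, (Gik n k i).Adj v w ↔
      v ≠ w ∧ pattern (cell k i (n - k - i) v) (cell k i (n - k - i) w) = 1 := by
    rintro (v | v | v) (w | w | w) <;> simp [Gik, join, cell, pattern]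
  have hp : ∀ a b, pattern a b = 1 ∨ pattern a b = 0 := by
    intro a b; fin_cases a <;> fin_cases b <;> simp [pattern]
  have hA : ∀ v w, (if (Gik n k i).Adj v w then (1 : ℝ) else 0)
      = pattern (cell k i (n - k - i) v) (cell k i (n - k - i) w) - if v = w then 1 else 0 := by
    intro v w
    rcases eq_or_ne v w with rfl | h
    · rcases v with v | v | v <;> simp [cell, pattern]
    · rcases hp (cell k i (n - k - i) v) (cell k i (n - k - i) w) with h' | h' <;>
        simp [hadj, h, h']
  have hdeg : ∀ v, ((Gik n k i).degree v : ℝ)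
      = ![(n : ℝ) - 2, (k : ℝ) + i - 2, (n : ℝ) - i - 2] (cell k i (n - k - i) v) + 1 := by
    intro v
    have : ((Gik n k i).degree v : ℝ) = ∑ w, if (Gik n k i).Adj v w then (1 : ℝ) else 0 := by
      rw [← SimpleGraph.card_neighborFinset_eq_degree, SimpleGraph.neighborFinset_eq_filter]
      simp
    rw [this]
    simp_rw [hA]
    have hm : ((n - k - i : ℕ) : ℝ) = n - k - i := by rw [hn, hn']; push_cast; ring
    rcases v with v | v | v <;>
      simp [cell, pattern, hm, Finset.sum_sub_distrib] <;> ring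
  have hQ : Q (Gik n k i) v w = (if v = w then ((Gik n k i).degree v : ℝ) else 0)
      + if (Gik n k i).Adj v w then (1 : ℝ) else 0 := by
    simp only [Q, SimpleGraph.degMatrix, Matrix.add_apply, Matrix.diagonal_apply,
      SimpleGraph.adjMatrix_apply]
  rw [hQ, hA, hdeg]
  split_ifs <;> ring

/-- The characteristic determinant of the `3 × 3` quotient, divided by the diagonal part
`(x - a) (x - b) (x - c)`. Its numerator vanishes at `a = n - 2`, which cancels one factor of the
denominator, and at the two conjugate numbers `n - 2 + k / 2 ± r / 2`. -/
lemma det_quotient (k i m n r x : ℝ) (hn : n = k + i + m)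
    (hr : r ^ 2 = (k - 2 * n) ^ 2 + 16 * i * (k - n + i))
    (h0 : x - (n - 2) ≠ 0) (h1 : x - (k + i - 2) ≠ 0) (h2 : x - (n - i - 2) ≠ 0) :
    (1 - Matrix.of fun j l => pattern j l
        * ((![k, i, m] l) / (x - ![n - 2, k + i - 2, n - i - 2] l))).det
      = (x - (n - 2 + k / 2 + 1 / 2 * r)) * (x - (n - 2 + k / 2 - 1 / 2 * r))
        / ((x - (k + i - 2)) * (x - (n - i - 2))) := by
  have hq : (x - (n - 2 + k / 2 + 1 / 2 * r)) * (x - (n - 2 + k / 2 - 1 / 2 * r))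
      = (x - (n - 2 + k / 2)) ^ 2
        - ((k - 2 * n) ^ 2 + 16 * i * (k - n + i)) / 4 := by
    rw [← hr]; ring
  rw [hq, Matrix.det_fin_three]
  simp [pattern]
  field_simp
  subst hn
  ring

theorem spectrum_Q_Gik (n k i : ℕ) (hk : 1 ≤ k) (hi : 1 ≤ i) (hi2 : i ≤ (n - k) / 2) :
    Finset.univ.val.map (eigs (Gik n k i))
      = ({(n : ℝ) - 2 + k / 2 + (1 / 2) * Real.sqrt (((k : ℝ) - 2 * n) ^ 2 + 16 * i * ((k : ℝ) - n + i)),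
          (n : ℝ) - 2,
          (n : ℝ) - 2 + k / 2 - (1 / 2) * Real.sqrt (((k : ℝ) - 2 * n) ^ 2 + 16 * i * ((k : ℝ) - n + i))} : Multiset ℝ)
        + Multiset.replicate (k - 1) ((n : ℝ) - 2)
        + Multiset.replicate (i - 1) ((k : ℝ) + i - 2)
        + Multiset.replicate (n - k - i - 1) ((n : ℝ) - i - 2) := by
  obtain ⟨m, hm⟩ : ∃ m, n - k - i = m + 1 := ⟨n - k - i - 1, by omega⟩
  have hn : n = k + i + (m + 1) := by omega
  have hnR : (n : ℝ) = k + i + (m + 1) := by rw [hn]; push_cast; ring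
  obtain ⟨k, rfl⟩ : ∃ k', k = k' + 1 := ⟨k - 1, by omega⟩
  obtain ⟨i, rfl⟩ : ∃ i', i = i' + 1 := ⟨i - 1, by omega⟩
  set r : ℝ := Real.sqrt ((((k + 1 : ℕ) : ℝ) - 2 * n) ^ 2
    + 16 * (i + 1 : ℕ) * (((k + 1 : ℕ) : ℝ) - n + (i + 1 : ℕ))) with hr
  have hr2 : r ^ 2 = (((k + 1 : ℕ) : ℝ) - 2 * n) ^ 2
      + 16 * (i + 1 : ℕ) * (((k + 1 : ℕ) : ℝ) - n + (i + 1 : ℕ)) := by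
    rw [hr, Real.sq_sqrt]
    -- for cells of sizes `K`, `I`, `M` the radicand is `K ^ 2 + 4 K (I + M) + 4 (I - M) ^ 2`;
    -- here the sizes are `k + 1`, `i + 1`, `m + 1`
    have : (0 : ℝ) ≤ (k + 1) ^ 2 + 4 * (k + 1) * (i + 1 + (m + 1)) + 4 * (i - m) ^ 2 := by
      positivity
    rw [hnR]; push_cast
    linarith
  clear_value r
  let d : Fin 3 → ℝ := ![(n : ℝ) - 2, ((k + 1 : ℕ) : ℝ) + (i + 1 : ℕ) - 2,
    (n : ℝ) - (i + 1 : ℕ) - 2]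
  set s : Multiset ℝ := _ + Multiset.replicate (n - (k + 1) - (i + 1) - 1) _ with hs
  have hchar : (Q (Gik n (k + 1) (i + 1))).charpoly
      = (s.map fun a => Polynomial.X - Polynomial.C a).prod := by
    -- off the three diagonal values, where `det_sub_cells` applies, the evaluations agree
    apply Polynomial.eq_of_infinite_eval_eq
    refine Set.Infinite.mono ?_ (Set.Finite.infinite_compl (Set.finite_range d))
    intro x hx
    have hx' : ∀ j, x - d j ≠ 0 := fun j h => hx ⟨j, by linarith⟩
    have h0 := hx' 0
    have h1 := hx' 1
    have h2 := hx' 2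
    have hM : Matrix.scalar _ x - Q (Gik n (k + 1) (i + 1)) = Matrix.of fun v w =>
        (if v = w then x - d (cell (k + 1) (i + 1) (n - (k + 1) - (i + 1)) v) else 0)
        - pattern (cell (k + 1) (i + 1) (n - (k + 1) - (i + 1)) v)
            (cell (k + 1) (i + 1) (n - (k + 1) - (i + 1)) w) := by
      ext v w
      rw [Matrix.sub_apply, Q_apply_s11 n (k + 1) (i + 1) _ hm hn, Matrix.scalar_apply,
        Matrix.diagonal_apply, Matrix.of_apply]
      dsimp only [d]
      split_ifs <;> ring
    rw [Set.mem_ofPred_eq, Matrix.eval_charpoly, hM, det_sub_cells _ _ _ _ _ _ hx', hs, hm,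
      det_quotient (k + 1 : ℕ) (i + 1 : ℕ) (m + 1 : ℕ) n r x (by exact_mod_cast hn) hr2
        h0 h1 h2]
    simp [d, Polynomial.eval_mul]
    simp [d] at h0 h1 h2
    field_simp
    ring
  have hroots := (Q_isHermitian (Gik n (k + 1) (i + 1))).roots_charpoly_eq_eigenvalues
  rw [hchar, Polynomial.roots_multiset_prod_X_sub_C] at hroots
  exact hroots.symm

end SLP
end
end
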